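/- Let 𝒯 be an infinite property (set of complete theories of Σ) and let T be a complete theory of Σ with T ∉ 𝒯. Then T ∈ Cl_E(𝒯) (i.e., T is an accumulation point of 𝒯 with respect to E-closure) if and only if for every sentence φ ∈ T the set 𝒯_φ = {T' ∈ 𝒯 : φ ∈ T'} is infinite. -/

import Mathlib

open FirstOrder Language

/-- The E-closure of a property `P`: the set of complete theories `T` such that every sentence
of `T` belongs to some theory of `P`. -/
def ClE {L : FirstOrder.Language} (P : Set L.Theory) : Set L.Theory :=
  {T | T.IsMaximal ∧ ∀ φ ∈ T, ∃ T' ∈ P, φ ∈ T'}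

theorem aux_model.{u, v} {L : FirstOrder.Language.{u, v}} {T : L.Theory} (h : T.IsMaximal) :
    ∃ M : FirstOrder.Language.Theory.ModelType.{u, v, max u v} T, ∀ φ : L.Sentence, φ ∈ T ↔ M ⊨ φ := by
  obtain ⟨M⟩ := h.1
  exact ⟨M, fun φ => by rw [h.mem_iff_models, h.isComplete.realize_sentence_iff φ M]⟩

theorem aux_inf {L : FirstOrder.Language} {T : L.Theory} (h : T.IsMaximal)
    (φ ψ : L.Sentence) : (φ ⊓ ψ : L.Sentence) ∈ T ↔ φ ∈ T ∧ ψ ∈ T := by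
  obtain ⟨M, hM⟩ := aux_model h
  rw [hM, hM, hM]
  exact FirstOrder.Language.Formula.realize_inf

theorem aux_not {L : FirstOrder.Language} {T : L.Theory} (h : T.IsMaximal)
    (φ : L.Sentence) : φ.not ∈ T ↔ φ ∉ T := by
  obtain ⟨M, hM⟩ := aux_model h
  rw [hM, hM]
  exact FirstOrder.Language.Formula.realize_not

theorem aux_sep {L : FirstOrder.Language} {T T' : L.Theory} (h : T.IsMaximal)
    (h' : T'.IsMaximal) (hne : T ≠ T') : ∃ ψ ∈ T, ψ ∉ T' := by
  by_contra! hc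
  refine hne (Set.Subset.antisymm hc fun φ hφ => ?_)
  by_contra hn
  exact (aux_not h' φ).1 (hc _ ((aux_not h φ).2 hn)) hφ

theorem aux_fin {L : FirstOrder.Language} {T : L.Theory} (h : T.IsMaximal)
    (φ : L.Sentence) (hφ : φ ∈ T) (F : Set L.Theory) (hF : F.Finite) :
    (∀ T' ∈ F, Theory.IsMaximal T') → T ∉ F → ∃ ψ ∈ T, ∀ T' ∈ F, ψ ∉ T' := by
  induction F, hF using Set.Finite.induction_on with
  | empty => exact fun _ _ => ⟨φ, hφ, by simp⟩
  | @insert A S _ _ ih =>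
    intro hm hT
    obtain ⟨ψ, hψ, h1⟩ := ih (fun T' hT' => hm T' (Set.mem_insert_of_mem _ hT'))
      (fun hh => hT (Set.mem_insert_of_mem _ hh))
    have hA := hm A (Set.mem_insert _ _)
    obtain ⟨χ, hχ, h2⟩ := aux_sep h hA (fun e => hT (e ▸ Set.mem_insert _ _))
    refine ⟨ψ ⊓ χ, (aux_inf h _ _).2 ⟨hψ, hχ⟩, fun T' hT' hmem => ?_⟩
    have h3 := (aux_inf (hm T' hT') _ _).1 hmem
    rcases hT' with rfl | hT'
    · exact h2 h3.2
    · exact h1 T' hT' h3.1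

/-- For an infinite property 𝒯 and a complete theory T ∉ 𝒯: T ∈ Cl_E(𝒯) (T is an accumulation
point of 𝒯) iff for every sentence φ ∈ T the set 𝒯_φ is infinite. -/
theorem mem_clE_iff_infinite {L : FirstOrder.Language} (𝒯 : Set L.Theory)
    (h𝒯 : ∀ T' ∈ 𝒯, Theory.IsMaximal T') (hinf : 𝒯.Infinite)
    (T : L.Theory) (hT : T.IsMaximal) (hTnotin : T ∉ 𝒯) :
    T ∈ ClE 𝒯 ↔ ∀ φ ∈ T, {T' ∈ 𝒯 | φ ∈ T'}.Infinite := by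
  constructor
  · rintro ⟨_, hcl⟩ φ hφ hfin
    obtain ⟨ψ, hψ, h1⟩ := aux_fin hT φ hφ _ hfin (fun T' hT' => h𝒯 T' hT'.1)
      (fun hh => hTnotin hh.1)
    obtain ⟨T', hT', hmem⟩ := hcl _ ((aux_inf hT φ ψ).2 ⟨hφ, hψ⟩)
    have h3 := (aux_inf (h𝒯 T' hT') _ _).1 hmem
    exact h1 T' ⟨hT', h3.1⟩ h3.2
  · intro h
    refine ⟨hT, fun φ hφ => ?_⟩
    obtain ⟨T', hT', hm⟩ := (h φ hφ).nonempty
    exact ⟨T', hT', hm⟩
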